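/- Let G be a core graph, F a forest in G, and C a core subgraph of G such that C equals the core of F ∪ C. Then the image of F in the quotient graph G//C is a forest. -/

import Mathlib

open Classical

/-- A multigraph with edge set `E`: loops and multiple edges are allowed.
A subgraph is identified with the (nonempty) set of edges spanning it. -/
structure GraphOn (E : Type) : Type 1 where
  V : Type
  ends : E → Sym2 V

namespace GraphOn

variable {E : Type}

/-- One-step adjacency using only edges in `F`. -/
def Step (G : GraphOn E) (F : Finset E) (u v : G.V) : Prop :=
  ∃ e ∈ F, G.ends e = s(u, v)

/-- Connectivity of vertices within the subgraph spanned by `F`. -/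
def Reach (G : GraphOn E) (F : Finset E) (u v : G.V) : Prop :=
  Relation.ReflTransGen (G.Step F) u v

/-- `F` is a forest: every edge of `F` is a bridge (separating edge) of the
subgraph spanned by `F`. -/
def IsForest (G : GraphOn E) (F : Finset E) : Prop :=
  ∀ e ∈ F, ∀ u v : G.V, G.ends e = s(u, v) → ¬ G.Reach (F.erase e) u v

/-- `C` spans a core subgraph: a nonempty set of edges having no separating
edges (every edge has its endpoints joined in the complement of the edge). -/
def IsCoreSet (G : GraphOn E) (C : Finset E) : Prop :=
  C.Nonempty ∧ ∀ e ∈ C, ∀ u v : G.V, G.ends e = s(u, v) → G.Reach (C.erase e) u v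

/-- A core graph: no isolated vertices and no separating edges. -/
def IsCoreGraph [Fintype E] (G : GraphOn E) : Prop :=
  (∀ v : G.V, ∃ e : E, v ∈ G.ends e) ∧
    ∀ e : E, ∀ u v : G.V, G.ends e = s(u, v) → G.Reach (Finset.univ.erase e) u v

/-- The core of (the subgraph spanned by) `H`: the maximal core subgraph of `H`,
i.e. the union of all core subgraphs contained in `H` (empty if there is none). -/
noncomputable def coreOf (G : GraphOn E) (H : Finset E) : Finset E :=
  H.filter fun e => ∃ C : Finset E, C ⊆ H ∧ G.IsCoreSet C ∧ e ∈ C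

/-- The quotient graph `G // H`, obtained by collapsing each edge of `H` to a
point.  Its vertices are the components of `H` (together with the vertices not
meeting `H`), and its edges are the edges of `G` not in `H`. -/
def quot (G : GraphOn E) (H : Finset E) : GraphOn {e : E // e ∉ H} where
  V := Quot fun u v : G.V => ∃ e ∈ H, G.ends e = s(u, v)
  ends e := (G.ends e.val).map (Quot.mk _)

/-- The image in `G // H` of a set `F` of edges of `G`. -/
noncomputable def imageIn (H F : Finset E) : Finset {e : E // e ∉ H} :=
  F.subtype fun e => e ∉ H

/-- The subgraph of `G` spanned by the edge set `C`, as a graph in its own right. -/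
def restrict (G : GraphOn E) (C : Finset E) : GraphOn {e : E // e ∈ C} where
  V := G.V
  ends e := G.ends e.val

/-- The number of edges in a maximal (spanning) forest contained in `H`. -/
noncomputable def maxForestCard (G : GraphOn E) (H : Finset E) : ℕ :=
  (H.powerset.filter fun F => G.IsForest F).sup Finset.card

/-- The rank (first Betti number) of the subgraph spanned by `H`. -/
noncomputable def rankOf (G : GraphOn E) (H : Finset E) : ℕ :=
  H.card - G.maxForestCard H

/-- The jewel of a graph `G`, with truncation constants `c C` for each proper
core subgraph `C`: the polytope obtained from the simplex `σ(G)` by shaving the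
face opposite `σ(C)` by the amount `c C`. -/
noncomputable def jewelWith [Fintype E] (G : GraphOn E) (c : Finset E → ℝ) :
    Set (E → ℝ) :=
  {x | (∀ e, 0 ≤ x e) ∧ (∑ e, x e) = 1 ∧
    ∀ C : Finset E, G.IsCoreSet C → C ≠ Finset.univ → c C ≤ ∑ e ∈ C, x e}

/-- The jewel of a graph `G` with the standard truncation constants
`3 ^ (rank C - 1) * ε`, which strictly increase with the rank of `C`. -/
noncomputable def jewel [Fintype E] (G : GraphOn E) (ε : ℝ) : Set (E → ℝ) :=
  G.jewelWith fun C => 3 ^ (G.rankOf C - 1) * ε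

/-- The border facet of the jewel opposite the face `σ(C)`, for `C` a proper
core subgraph. -/
noncomputable def borderFacet [Fintype E] (G : GraphOn E) (ε : ℝ) (C : Finset E) :
    Set (E → ℝ) :=
  {x | x ∈ G.jewel ε ∧ ∑ e ∈ C, x e = 3 ^ (G.rankOf C - 1) * ε}

end GraphOn

/-- An abstract framework for the family of manifolds `M_{n,s}` (connected sums
of `n` copies of `S¹ × S²` with `s` open balls removed) and their disjoint
unions, together with (isotopy classes of) nontrivial embedded 2-spheres,
sphere systems, and the operation of cutting along a system. -/
structure SphereWorld where
  /-- the collection of manifolds under consideration -/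
  M : Type
  /-- `Mns n s` is the manifold `M_{n,s}` -/
  Mns : ℕ → ℕ → M
  /-- isotopy classes of nontrivial embedded 2-spheres in `m` -/
  Sphere : M → Type
  /-- `IsSystem m S`: the spheres of `S` admit pairwise disjoint representatives -/
  IsSystem : ∀ m : M, Finset (Sphere m) → Prop
  /-- `cut m S` is the manifold `m − S` obtained by cutting `m` open along `S` -/
  cut : ∀ m : M, Finset (Sphere m) → M
  /-- the multiset of connected components of `m` -/
  pieces : M → Multiset M
  /-- every connected component of `m` is simply connected -/
  AllPiecesSimplyConnected : M → Prop
  /-- `Separating m s`: the sphere `s` separates `m` -/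
  Separating : ∀ m : M, Sphere m → Prop
  /-- the sphere of `m − T` induced by a sphere of `m` (disjoint from `T`) -/
  pushSphere : ∀ (m : M) (T : Finset (Sphere m)), Sphere m → Sphere (cut m T)
  /-- the graph dual to a sphere system `S` in `m`: one vertex for each
  component of `m − S` and one edge for each sphere of `S` -/
  dualGraph : ∀ (m : M) (S : Finset (Sphere m)), GraphOn {x : Sphere m // x ∈ S}

namespace SphereWorld

variable (W : SphereWorld)

/-- The number of connected components. -/
def numComponents (m : W.M) : ℕ := (W.pieces m).card

/-- `h(S)`: the number of spheres of `S` minus the number of components of `m − S`. -/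
def hh (m : W.M) (S : Finset (W.Sphere m)) : ℤ :=
  (S.card : ℤ) - (W.numComponents (W.cut m S) : ℤ)

/-- A core sphere system: one containing no separating spheres. -/
def IsCore (m : W.M) (S : Finset (W.Sphere m)) : Prop :=
  W.IsSystem m S ∧ ∀ s ∈ S, ¬ W.Separating m s

/-- A complete sphere system: every component of `m − S` is simply connected. -/
def IsComplete (m : W.M) (S : Finset (W.Sphere m)) : Prop :=
  W.IsSystem m S ∧ W.AllPiecesSimplyConnected (W.cut m S)

/-- The image in `m − T` of a set `S` of spheres of `m`. -/
noncomputable def push (m : W.M) (T S : Finset (W.Sphere m)) :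
    Finset (W.Sphere (W.cut m T)) :=
  S.image (W.pushSphere m T)

/-- `T` is a core complement in `S`: `T ⊂ S` and `S − T` is core in `m − T`. -/
def IsCoreComplement (m : W.M) (S T : Finset (W.Sphere m)) : Prop :=
  T ⊂ S ∧ W.IsCore (W.cut m T) (W.push m T (S \ T))

/-- The truncation constant `t(S,T) = 3 ^ (h(S) − h(T)) / N`. -/
noncomputable def tconst (N : ℕ) (m : W.M) (S T : Finset (W.Sphere m)) : ℝ :=
  (3 : ℝ) ^ (W.hh m S - W.hh m T) / (N : ℝ)

/-- The closed simplex `σ(S)` spanned by a sphere system `S`, realized as the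
weight functions supported on `S`, with nonnegative weights summing to `1`. -/
def simplexSet (m : W.M) (S : Finset (W.Sphere m)) : Set (W.Sphere m → ℝ) :=
  {x | (∀ s, 0 ≤ x s) ∧ (∀ s ∉ S, x s = 0) ∧ ∑ s ∈ S, x s = 1}

/-- The open simplex spanned by a sphere system `S`. -/
def openSimplex (m : W.M) (S : Finset (W.Sphere m)) : Set (W.Sphere m → ℝ) :=
  {x | (∀ s ∈ S, 0 < x s) ∧ (∀ s ∉ S, x s = 0) ∧ ∑ s ∈ S, x s = 1}

/-- The jewel `J_m(S) ⊆ σ(S)` (with parameter `N`): the polytope obtained from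
`σ(S)` by truncating the face `σ(T)` by the amount `t(S,T)`, for every
(nonempty) core complement `T ⊂ S`. -/
noncomputable def jewelSet (N : ℕ) (m : W.M) (S : Finset (W.Sphere m)) :
    Set (W.Sphere m → ℝ) :=
  {x | x ∈ W.simplexSet m S ∧
    ∀ T : Finset (W.Sphere m), T.Nonempty → W.IsCoreComplement m S T →
      W.tconst N m S T ≤ ∑ s ∈ S \ T, x s}

/-- The interior of the jewel `J_m(S)`. -/
noncomputable def jewelInterior (N : ℕ) (m : W.M) (S : Finset (W.Sphere m)) :
    Set (W.Sphere m → ℝ) :=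
  {x | x ∈ W.openSimplex m S ∧
    ∀ T : Finset (W.Sphere m), T.Nonempty → W.IsCoreComplement m S T →
      W.tconst N m S T < ∑ s ∈ S \ T, x s}

/-- The facet `φ(S,T)` of the jewel `J_m(S)` created by truncating `σ(T)`. -/
noncomputable def facetSet (N : ℕ) (m : W.M) (S T : Finset (W.Sphere m)) :
    Set (W.Sphere m → ℝ) :=
  {x | x ∈ W.jewelSet N m S ∧ ∑ s ∈ S \ T, x s = W.tconst N m S T}

/-- Jewel space `𝒥(m)`: the union of the jewels of all complete core sphere
systems in `m` (glued along their common faces). -/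
noncomputable def jewelSpace (N : ℕ) (m : W.M) : Set (W.Sphere m → ℝ) :=
  {x | ∃ S : Finset (W.Sphere m),
    W.IsComplete m S ∧ W.IsCore m S ∧ x ∈ W.jewelSet N m S}

/-- The wall `W(T)`: the union of the facets `φ(S,T)` over all complete core
systems `S` containing `T` as a core complement. -/
noncomputable def wall (N : ℕ) (m : W.M) (T : Finset (W.Sphere m)) :
    Set (W.Sphere m → ℝ) :=
  {x | ∃ S : Finset (W.Sphere m), W.IsComplete m S ∧ W.IsCore m S ∧
    W.IsCoreComplement m S T ∧ x ∈ W.facetSet N m S T}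

/-- The boundary `∂𝒥(m)` of jewel space: the union of all the facets `φ(S,T)`
over complete core systems `S` and core complements `T ⊂ S`. -/
noncomputable def jewelBoundary (N : ℕ) (m : W.M) : Set (W.Sphere m → ℝ) :=
  {x | ∃ S T : Finset (W.Sphere m), W.IsComplete m S ∧ W.IsCore m S ∧
    T.Nonempty ∧ W.IsCoreComplement m S T ∧ x ∈ W.facetSet N m S T}

/-- The sphere complex `SC(m)`, realized as the union of the closed simplices
`σ(S)` over all sphere systems `S` in `m`. -/
def sphereComplex (m : W.M) : Set (W.Sphere m → ℝ) :=
  {x | ∃ S : Finset (W.Sphere m), W.IsSystem m S ∧ x ∈ W.simplexSet m S}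

/-- The subcomplex `SC_∞(m)` spanned by the incomplete core sphere systems. -/
def scInfty (m : W.M) : Set (W.Sphere m → ℝ) :=
  {x | ∃ S : Finset (W.Sphere m),
    W.IsCore m S ∧ ¬ W.IsComplete m S ∧ x ∈ W.simplexSet m S}

/-- The `d`-skeleton of the sphere complex: the union of the simplices `σ(S)`
with `S.card ≤ d + 1`. -/
def skeleton (m : W.M) (d : ℕ) : Set (W.Sphere m → ℝ) :=
  {x | ∃ S : Finset (W.Sphere m),
    W.IsSystem m S ∧ S.card ≤ d + 1 ∧ x ∈ W.simplexSet m S}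

/-- The jewel `J(S)` of a sphere system, in coordinates indexed by the spheres
of `S` (so that it lives in the same Euclidean space as the jewel of the dual
graph of `S`). -/
noncomputable def jewelCoords (N : ℕ) (m : W.M) (S : Finset (W.Sphere m)) :
    Set ({x : W.Sphere m // x ∈ S} → ℝ) :=
  {x | (∀ e, 0 ≤ x e) ∧ (∑ e, x e) = 1 ∧
    ∀ T : Finset (W.Sphere m), T.Nonempty → W.IsCoreComplement m S T →
      W.tconst N m S T ≤
        ∑ e ∈ Finset.univ.filter
          (fun e : {x : W.Sphere m // x ∈ S} => (e : W.Sphere m) ∈ S \ T), x e}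

end SphereWorld

/-- The (geometric) join of a finite family of subsets `A i` of the spaces
`κ i → ℝ`: formal convex combinations `∑ tᵢ aᵢ` with `aᵢ ∈ A i`, realized
inside `(Σ i, κ i) → ℝ`. -/
def geomJoin {k : ℕ} {κ : Fin k → Type} (A : ∀ i, Set (κ i → ℝ)) :
    Set ((Σ i, κ i) → ℝ) :=
  {x | ∃ (t : Fin k → ℝ) (a : ∀ i, κ i → ℝ), (∀ i, 0 ≤ t i) ∧ (∑ i, t i) = 1 ∧
    (∀ i, t i ≠ 0 → a i ∈ A i) ∧ ∀ p : Σ i, κ i, x p = t p.1 * a p.1 p.2}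

namespace GraphOn

theorem step_symm {E : Type} (G : GraphOn E) (F : Finset E) {u v : G.V}
    (h : G.Step F u v) : G.Step F v u := by
  obtain ⟨e, he, h⟩ := h
  exact ⟨e, he, h.trans Sym2.eq_swap⟩

theorem reach_symm {E : Type} (G : GraphOn E) (F : Finset E) {u v : G.V}
    (h : G.Reach F u v) : G.Reach F v u := by
  induction h with
  | refl => exact Relation.ReflTransGen.refl
  | tail _ hs ih => exact Relation.ReflTransGen.head (G.step_symm F hs) ih

theorem reach_mono {E : Type} (G : GraphOn E) {F F' : Finset E} (hFF : F ⊆ F') {u v : G.V}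
    (h : G.Reach F u v) : G.Reach F' u v :=
  by
  induction h with
  | refl => exact Relation.ReflTransGen.refl
  | tail _ hs ih =>
    obtain ⟨e, he, hs⟩ := hs
    exact ih.tail ⟨e, hFF he, hs⟩

theorem reach_edge {E : Type} (G : GraphOn E) {F : Finset E} {e : E} (he : e ∈ F) {u v : G.V}
    (h : G.ends e = s(u, v)) : G.Reach F u v :=
  Relation.ReflTransGen.single ⟨e, he, h⟩

/-- Deleting the edge `f = xy` from a walk from `u` to `v`. -/
theorem reach_erase {E : Type} (G : GraphOn E) (D : Finset E) (f : E) {x y u v : G.V}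
    (hf : G.ends f = s(x, y)) (h : G.Reach D u v) :
    G.Reach (D.erase f) u v ∨
      (G.Reach (D.erase f) u x ∧ G.Reach (D.erase f) y v) ∨
      (G.Reach (D.erase f) u y ∧ G.Reach (D.erase f) x v) := by
  induction h with
  | refl => exact Or.inl Relation.ReflTransGen.refl
  | @tail b c _ hs ih =>
    obtain ⟨g, hg, hgbc⟩ := hs
    by_cases hgf : g = f
    · subst hgf
      rw [hf, Sym2.eq_iff] at hgbc
      have r : ∀ z, G.Reach (D.erase g) z z := fun z => Relation.ReflTransGen.refl
      rcases hgbc with ⟨rfl, rfl⟩ | ⟨rfl, rfl⟩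
      · rcases ih with h | ⟨h, _⟩ | ⟨h, _⟩
        · exact Or.inr (Or.inl ⟨h, r _⟩)
        · exact Or.inr (Or.inl ⟨h, r _⟩)
        · exact Or.inl h
      · rcases ih with h | ⟨h, _⟩ | ⟨h, _⟩
        · exact Or.inr (Or.inr ⟨h, r _⟩)
        · exact Or.inl h
        · exact Or.inr (Or.inr ⟨h, r _⟩)
    · have hstep : G.Reach (D.erase f) b c :=
        G.reach_edge (Finset.mem_erase.2 ⟨hgf, hg⟩) hgbc
      rcases ih with h | ⟨h, h'⟩ | ⟨h, h'⟩
      · exact Or.inl (h.trans hstep)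
      · exact Or.inr (Or.inl ⟨h, h'.trans hstep⟩)
      · exact Or.inr (Or.inr ⟨h, h'.trans hstep⟩)

/-- A non-separating edge of `H` lies in a core subgraph of `H`. -/
theorem exists_core {E : Type} (G : GraphOn E) (H : Finset E) (e : E) (he : e ∈ H) {u v : G.V}
    (huv : G.ends e = s(u, v)) (h : G.Reach (H.erase e) u v) :
    ∃ C : Finset E, C ⊆ H ∧ G.IsCoreSet C ∧ e ∈ C := by
  have key : ∀ n : ℕ, ∀ D : Finset E, D.card = n → D ⊆ H.erase e → G.Reach D u v →
      ∃ D' : Finset E, D' ⊆ H.erase e ∧ G.Reach D' u v ∧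
        ∀ f ∈ D', ¬ G.Reach (D'.erase f) u v := by
    intro n
    induction n with
    | zero =>
      intro D hD hDs hR
      refine ⟨D, hDs, hR, fun f hf => ?_⟩
      rw [Finset.card_eq_zero] at hD
      simp [hD] at hf
    | succ n ih =>
      intro D hD hDs hR
      by_cases hm : ∃ f ∈ D, G.Reach (D.erase f) u v
      · obtain ⟨f, hf, hr⟩ := hm
        exact ih (D.erase f) (by rw [Finset.card_erase_of_mem hf, hD]; rfl)
          ((Finset.erase_subset _ _).trans hDs) hr
      · exact ⟨D, hDs, hR, fun f hf hr => hm ⟨f, hf, hr⟩⟩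
  obtain ⟨D, hDs, hR, hmin⟩ := key _ _ rfl (Finset.Subset.refl _) h
  have heD : e ∉ D := fun hh => (Finset.mem_erase.1 (hDs hh)).1 rfl
  refine ⟨insert e D, ?_, ⟨⟨e, Finset.mem_insert_self _ _⟩, ?_⟩, Finset.mem_insert_self _ _⟩
  · exact Finset.insert_subset he (hDs.trans (Finset.erase_subset _ _))
  · intro f hf x y hxy
    rcases Finset.mem_insert.1 hf with rfl | hfD
    · rw [Finset.erase_insert heD]
      rw [huv, Sym2.eq_iff] at hxy
      rcases hxy with ⟨rfl, rfl⟩ | ⟨rfl, rfl⟩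
      · exact hR
      · exact G.reach_symm _ hR
    · have hef : e ≠ f := fun hh => heD (hh ▸ hfD)
      have hsub : D.erase f ⊆ (insert e D).erase f :=
        Finset.erase_subset_erase _ (Finset.subset_insert _ _)
      have heR : G.Reach ((insert e D).erase f) u v :=
        G.reach_edge (Finset.mem_erase.2 ⟨hef, Finset.mem_insert_self _ _⟩) huv
      rcases G.reach_erase D f hxy hR with h0 | ⟨h1, h2⟩ | ⟨h1, h2⟩
      · exact absurd h0 (hmin f hfD)
      · have h1 := G.reach_mono hsub h1
        have h2 := G.reach_mono hsub h2
        exact ((G.reach_symm _ h1).trans heR).trans (G.reach_symm _ h2)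
      · have h1 := G.reach_mono hsub h1
        have h2 := G.reach_mono hsub h2
        exact (h2.trans (G.reach_symm _ heR)).trans h1

theorem reach_of_mk_eq {E : Type} (G : GraphOn E) (C : Finset E) {a b : G.V}
    (h : (Quot.mk _ a : (G.quot C).V) = Quot.mk _ b) : G.Reach C a b := by
  have h' := Quot.eqvGen_exact h
  induction h' with
  | rel x y hxy => exact Relation.ReflTransGen.single hxy
  | refl x => exact Relation.ReflTransGen.refl
  | symm x y hxy ih => exact G.reach_symm _ (ih h.symm)
  | trans x y z hxy hyz ih1 ih2 =>
    exact (ih1 (Quot.eqvGen_sound hxy)).trans (ih2 (Quot.eqvGen_sound hyz))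

/-- Lifting walks from the quotient. -/
theorem reach_lift {E : Type} (G : GraphOn E) (C : Finset E) (K : Finset {e : E // e ∉ C})
    (H : Finset E) (hC : C ⊆ H) (hK : ∀ k ∈ K, k.1 ∈ H) {p q : (G.quot C).V}
    (h : (G.quot C).Reach K p q) :
    ∀ a b : G.V, Quot.mk _ a = p → Quot.mk _ b = q → G.Reach H a b := by
  induction h with
  | refl =>
    intro a b ha hb
    exact G.reach_mono hC (G.reach_of_mk_eq C (ha.trans hb.symm))
  | tail _ hs ih =>
    intro a b ha hb
    obtain ⟨k, hk, hkk⟩ := hs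
    obtain ⟨x, y, hxy⟩ : ∃ x y, G.ends k.1 = s(x, y) := by
      induction hh : G.ends k.1 using Sym2.ind with
      | _ x y => exact ⟨x, y, rfl⟩
    have hkk' : (G.ends k.1).map (Quot.mk _) = s(_, _) := hkk
    rw [hxy, Sym2.map_mk] at hkk'
    replace hkk' := Sym2.eq_iff.1 hkk'
    have hR := G.reach_edge (hK k hk) hxy
    rcases hkk' with ⟨h1, h2⟩ | ⟨h1, h2⟩
    · exact ((ih a x ha h1).trans hR).trans
        (G.reach_mono hC (G.reach_of_mk_eq C (h2.trans hb.symm)))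
    · exact ((ih a y ha h2).trans (G.reach_symm _ hR)).trans
        (G.reach_mono hC (G.reach_of_mk_eq C (h1.trans hb.symm)))

end GraphOn

/-- Let `G` be a core graph, `F` a forest in `G`, and `C` a
core subgraph of `G` such that `C` equals the core of `F ∪ C`.  Then the image
of `F` in the quotient graph `G // C` is a forest. -/
theorem forest_image_in_quotient {E : Type} [Fintype E] (G : GraphOn E)
    (hG : G.IsCoreGraph) (F C : Finset E) (hF : G.IsForest F)
    (hC : G.IsCoreSet C) (hcore : C = G.coreOf (F ∪ C)) :
    (G.quot C).IsForest (GraphOn.imageIn C F) := by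
  intro e he p q hpq hR
  have heF : e.1 ∈ F := by simpa [GraphOn.imageIn] using he
  obtain ⟨u, v, huv⟩ : ∃ u v, G.ends e.1 = s(u, v) := by
    induction hh : G.ends e.1 using Sym2.ind with
    | _ x y => exact ⟨x, y, rfl⟩
  have hlift := G.reach_lift C _ ((F ∪ C).erase e.1)
    (fun c hc => Finset.mem_erase.2
      ⟨fun h => e.2 (h ▸ hc), Finset.mem_union_right _ hc⟩)
    (fun k hk => by
      obtain ⟨hk1, hk2⟩ := (@Finset.mem_erase _ (fun a b => propDecidable (a = b)) _ _ _).1 hk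
      have hkF : k.1 ∈ F := by simpa [GraphOn.imageIn] using hk2
      exact Finset.mem_erase.2
        ⟨fun h => hk1 (Subtype.ext h), Finset.mem_union_left _ hkF⟩) hR
  have hpq' : (G.ends e.1).map (Quot.mk _) = s(p, q) := hpq
  rw [huv, Sym2.map_mk] at hpq'
  replace hpq' := Sym2.eq_iff.1 hpq'
  have hr : G.Reach ((F ∪ C).erase e.1) u v := by
    rcases hpq' with ⟨h1, h2⟩ | ⟨h1, h2⟩
    · exact hlift u v h1 h2
    · exact G.reach_symm _ (hlift v u h2 h1)
  have hmem : e.1 ∈ F ∪ C := Finset.mem_union_left _ heF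
  have hex := G.exists_core (F ∪ C) e.1 hmem huv hr
  apply e.2
  have hfin : e.1 ∈ G.coreOf (F ∪ C) := Finset.mem_filter.2 ⟨hmem, hex⟩
  exact hcore.symm.subset hfin
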